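/- Let E be a finitely complete and cocomplete category equipped with a functorial cylinder I⊗(−) having a right adjoint exp(I,−). Let I be a class of maps, Cof = llp(rlp(I)), I_⊗ = { δᵏ ⊗̂ i : i ∈ I, k ∈ {0,1} }, Fib = rlp(I_⊗), and TrivCof = llp(Fib). Let S be the class of maps that are strong 0-oriented or strong 1-oriented homotopy equivalences. Then every map lying in Cof ∩ S lies in TrivCof. -/

import Mathlib

/-!
Statement 7 (Lemma `thm:main-sheretract`(ii)): every cofibration that is a strong
homotopy equivalence is a trivial cofibration, i.e. `Cof ∩ S ⊆ TrivCof`.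
-/

open CategoryTheory Category Limits

universe v u

namespace GS

variable {E : Type u} [Category.{v} E]

def rlp (J : MorphismProperty E) : MorphismProperty E :=
  fun _ _ p => ∀ ⦃A B : E⦄ (i : A ⟶ B), J i → HasLiftingProperty i p

def llp (J : MorphismProperty E) : MorphismProperty E :=
  fun _ _ i => ∀ ⦃X Y : E⦄ (p : X ⟶ Y), J p → HasLiftingProperty i p

structure Cylinder (E : Type u) [Category.{v} E] where
  I : E ⥤ E
  δ : Fin 2 → (𝟭 E ⟶ I)

variable (Q : Cylinder E)

noncomputable def Cylinder.leibniz [HasPushouts E] (k : Fin 2) {A B : E} (i : A ⟶ B) :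
    pushout ((Q.δ k).app A) i ⟶ Q.I.obj B :=
  pushout.desc (Q.I.map i) ((Q.δ k).app B) (by simpa using ((Q.δ k).naturality i).symm)

def IsStrongHEquivWith (k : Fin 2) {X Y : E} (f : X ⟶ Y)
    (g : Y ⟶ X) (φ : Q.I.obj X ⟶ X) (ψ : Q.I.obj Y ⟶ Y) : Prop :=
  (Q.δ k).app X ≫ φ = f ≫ g ∧ (Q.δ (1 - k)).app X ≫ φ = 𝟙 X ∧
  (Q.δ k).app Y ≫ ψ = g ≫ f ∧ (Q.δ (1 - k)).app Y ≫ ψ = 𝟙 Y ∧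
  φ ≫ f = Q.I.map f ≫ ψ

def IsStrongHEquiv (k : Fin 2) {X Y : E} (f : X ⟶ Y) : Prop :=
  ∃ g φ ψ, IsStrongHEquivWith Q k f g φ ψ

/-- Fibrations: maps with the right lifting property with respect to the
generating trivial cofibrations `I_⊗ = {δᵏ ⊗̂ i | i ∈ I, k ∈ {0,1}}`. -/
def fib [HasPushouts E] (I : MorphismProperty E) : MorphismProperty E :=
  fun _ _ p => ∀ ⦃A B : E⦄ (i : A ⟶ B), I i → ∀ k : Fin 2,
    HasLiftingProperty (Q.leibniz k i) p

/-- Evaluation at an endpoint, `exp(I, R) ⟶ R`. -/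
def ev {Exp : E ⥤ E} (adj : Q.I ⊣ Exp) (k : Fin 2) (R : E) : Exp.obj R ⟶ R :=
  (Q.δ k).app (Exp.obj R) ≫ adj.counit.app R

lemma delta_nat (k : Fin 2) {A B : E} (i : A ⟶ B) :
    (Q.δ k).app A ≫ Q.I.map i = i ≫ (Q.δ k).app B := by
  simpa using ((Q.δ k).naturality i).symm

lemma comp_ev {Exp : E ⥤ E} (adj : Q.I ⊣ Exp) (k : Fin 2) {A R : E} (l : A ⟶ Exp.obj R) :
    l ≫ ev Q adj k R = (Q.δ k).app A ≫ (adj.homEquiv A R).symm l := by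
  rw [ev, Adjunction.homEquiv_counit, ← assoc, ← assoc, delta_nat]

lemma homEquiv_ev {Exp : E ⥤ E} (adj : Q.I ⊣ Exp) (k : Fin 2) {A R : E}
    (m : Q.I.obj A ⟶ R) :
    adj.homEquiv A R m ≫ ev Q adj k R = (Q.δ k).app A ≫ m := by
  rw [comp_ev, Equiv.symm_apply_apply]

lemma ev_nat {Exp : E ⥤ E} (adj : Q.I ⊣ Exp) (k : Fin 2) {P R : E} (p : P ⟶ R) :
    Exp.map p ≫ ev Q adj k R = ev Q adj k P ≫ p := by
  rw [comp_ev, ev, assoc, Adjunction.homEquiv_counit, adj.counit_naturality]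

/-- The Leibniz exponential. -/
noncomputable def lexp [HasPullbacks E] {Exp : E ⥤ E} (adj : Q.I ⊣ Exp) (k : Fin 2)
    {P R : E} (p : P ⟶ R) : Exp.obj P ⟶ pullback (ev Q adj k R) p :=
  pullback.lift (Exp.map p) (ev Q adj k P) (ev_nat Q adj k p)

lemma lift_leibniz [HasPullbacks E] [HasPushouts E] {Exp : E ⥤ E} (adj : Q.I ⊣ Exp) (k : Fin 2)
    {P R : E} (p : P ⟶ R) {A B : E} (i : A ⟶ B) (h : HasLiftingProperty i (lexp Q adj k p)) :
    HasLiftingProperty (Q.leibniz k i) p := by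
  constructor
  intro a b sq
  have w1 : pushout.inl _ _ ≫ a ≫ p = Q.I.map i ≫ b := by
    rw [sq.w, Cylinder.leibniz, pushout.inl_desc_assoc]
  have w2 : pushout.inr _ _ ≫ a ≫ p = (Q.δ k).app B ≫ b := by
    rw [sq.w, Cylinder.leibniz, pushout.inr_desc_assoc]
  have sq' : CommSq (adj.homEquiv A P (pushout.inl _ _ ≫ a)) i (lexp Q adj k p)
      (pullback.lift (adj.homEquiv B R b) (pushout.inr _ _ ≫ a)
        (by rw [homEquiv_ev, assoc, w2])) := by
    constructor
    apply pullback.hom_ext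
    · rw [assoc, assoc, lexp, pullback.lift_fst, pullback.lift_fst,
        ← Adjunction.homEquiv_naturality_right, ← Adjunction.homEquiv_naturality_left, assoc, w1]
    · rw [assoc, assoc, lexp, pullback.lift_snd, pullback.lift_snd, homEquiv_ev,
        pushout.condition_assoc]
  obtain ⟨l, h1, h0⟩ : ∃ l, i ≫ l = _ ∧ l ≫ lexp Q adj k p = _ :=
    ⟨sq'.lift, sq'.fac_left, sq'.fac_right⟩
  have h2 := h0 =≫ pullback.fst _ _
  have h3 := h0 =≫ pullback.snd _ _
  rw [assoc, pullback.lift_fst, lexp, pullback.lift_fst] at h2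
  rw [assoc, pullback.lift_snd, lexp, pullback.lift_snd, comp_ev] at h3
  refine ⟨⟨⟨(adj.homEquiv B P).symm l, ?_, ?_⟩⟩⟩
  · apply pushout.hom_ext
    · rw [Cylinder.leibniz, pushout.inl_desc_assoc, ← Adjunction.homEquiv_naturality_left_symm,
        h1, Equiv.symm_apply_apply]
    · rw [Cylinder.leibniz, pushout.inr_desc_assoc]
      exact h3
  · rw [← Adjunction.homEquiv_naturality_right_symm, h2, Equiv.symm_apply_apply]

lemma lift_lexp [HasPullbacks E] [HasPushouts E] {Exp : E ⥤ E} (adj : Q.I ⊣ Exp) (k : Fin 2)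
    {P R : E} (p : P ⟶ R) {A B : E} (i : A ⟶ B) (h : HasLiftingProperty (Q.leibniz k i) p) :
    HasLiftingProperty i (lexp Q adj k p) := by
  constructor
  intro a b sq
  have w1 : a ≫ Exp.map p = i ≫ b ≫ pullback.fst _ _ := by
    have := sq.w =≫ pullback.fst _ _
    rwa [assoc, assoc, lexp, pullback.lift_fst] at this
  have w2 : a ≫ ev Q adj k P = i ≫ b ≫ pullback.snd _ _ := by
    have := sq.w =≫ pullback.snd _ _
    rwa [assoc, assoc, lexp, pullback.lift_snd] at this
  have sq' : CommSq (pushout.desc ((adj.homEquiv A P).symm a) (b ≫ pullback.snd _ _)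
      (by rw [← comp_ev, w2])) (Q.leibniz k i) p
      ((adj.homEquiv B R).symm (b ≫ pullback.fst _ _)) := by
    constructor
    apply pushout.hom_ext
    · rw [Cylinder.leibniz, pushout.inl_desc_assoc, pushout.inl_desc_assoc,
        ← Adjunction.homEquiv_naturality_right_symm, ← Adjunction.homEquiv_naturality_left_symm, w1]
    · rw [Cylinder.leibniz, pushout.inr_desc_assoc, pushout.inr_desc_assoc, ← comp_ev,
        assoc, assoc, pullback.condition]
  obtain ⟨l, h0, h1⟩ : ∃ l, Q.leibniz k i ≫ l = _ ∧ l ≫ p = _ :=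
    ⟨sq'.lift, sq'.fac_left, sq'.fac_right⟩
  have h2 := pushout.inl _ _ ≫= h0
  have h3 := pushout.inr _ _ ≫= h0
  rw [pushout.inl_desc, Cylinder.leibniz, pushout.inl_desc_assoc] at h2
  rw [pushout.inr_desc, Cylinder.leibniz, pushout.inr_desc_assoc] at h3
  refine ⟨⟨⟨adj.homEquiv B P l, ?_, ?_⟩⟩⟩
  · rw [← Adjunction.homEquiv_naturality_left]
    erw [h2]
    rw [Equiv.apply_symm_apply]
  · apply pullback.hom_ext
    · rw [assoc, lexp, pullback.lift_fst, ← Adjunction.homEquiv_naturality_right, h1,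
        Equiv.apply_symm_apply]
    · rw [assoc, lexp, pullback.lift_snd, homEquiv_ev]
      exact h3

lemma lift_of_strong [HasPushouts E] (k : Fin 2) {X Y P R : E} (f : X ⟶ Y) (p : P ⟶ R)
    (hf : IsStrongHEquiv Q k f) (h : HasLiftingProperty (Q.leibniz k f) p) :
    HasLiftingProperty f p := by
  obtain ⟨g, φ, ψ, e1, e2, e3, e4, e5⟩ := hf
  constructor
  intro a b sq
  have sq' : CommSq (pushout.desc (φ ≫ a) (g ≫ a) (by rw [reassoc_of% e1]))
      (Q.leibniz k f) p (ψ ≫ b) := by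
    constructor
    apply pushout.hom_ext
    · rw [Cylinder.leibniz, pushout.inl_desc_assoc, pushout.inl_desc_assoc, assoc, sq.w,
        reassoc_of% e5]
    · rw [Cylinder.leibniz, pushout.inr_desc_assoc, pushout.inr_desc_assoc, assoc, sq.w,
        reassoc_of% e3]
  obtain ⟨l, h0, h1⟩ : ∃ l, Q.leibniz k f ≫ l = _ ∧ l ≫ p = _ :=
    ⟨sq'.lift, sq'.fac_left, sq'.fac_right⟩
  have h2 := pushout.inl _ _ ≫= h0
  rw [pushout.inl_desc, Cylinder.leibniz, pushout.inl_desc_assoc] at h2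
  refine ⟨⟨⟨(Q.δ (1 - k)).app Y ≫ l, ?_, ?_⟩⟩⟩
  · rw [← assoc, ← delta_nat, assoc]
    erw [h2]
    rw [reassoc_of% e2]
  · rw [assoc, h1, reassoc_of% e4]

theorem cof_inter_S_mem_trivCof
    [HasFiniteLimits E] [HasFiniteColimits E]
    (Exp : E ⥤ E) (adj : Q.I ⊣ Exp)
    (I : MorphismProperty E) {X Y : E} (f : X ⟶ Y)
    (hcof : llp (rlp I) f)
    (hS : IsStrongHEquiv Q 0 f ∨ IsStrongHEquiv Q 1 f) :
    llp (fib Q I) f := by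
  intro P R p hp
  have key : ∀ k : Fin 2, HasLiftingProperty (Q.leibniz k f) p := fun k =>
    lift_leibniz Q adj k p f (hcof _ (fun _ _ i hi => lift_lexp Q adj k p i (hp i hi k)))
  rcases hS with h | h
  · exact lift_of_strong Q 0 f p h (key 0)
  · exact lift_of_strong Q 1 f p h (key 1)

end GS
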